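/- arXiv:1812.10457 — 3 statements merged into one kernel-verified Lean document; each statement's English description precedes it below -/
import Mathlib

section
/- Fix α ∈ [5/6, 1], ε > 0, δ ∈ (0, 1], and P ≥ 1, and set Q0 = P^{(1−α−ε)/2}, Q1 = Q2 = P^{(α−1/2−ε)/2}, A1 = 3·P^{(2α−3/2)/2}, and A2 = 3·P^{1/4}; assume Q0, Q1, Q2, A1, A2 are positive integers. For reals g0, g1, g2, let d_min(g0, g1, g2) be the minimum of |g0·(q0 − q̃0) + A1·g1·(q1 − q̃1) + A2·g2·(q2 − q̃2)| over all pairs of integer triples (q0, q1, q2) ≠ (q̃0, q̃1, q̃2) with |q0|, |q̃0| ≤ Q0, |q1|, |q̃1| ≤ Q1, and |q2|, |q̃2| ≤ Q2. Then the set H₀ := {(h11, h12, h21, h22) ∈ (1, 2]⁴ : d_min(h11·h22, h12·h21, h11·h22) < δ} has four-dimensional Lebesgue measure at most 12096·δ·P^{−ε/2}; in particular, d_min(h11·h22, h12·h21, h11·h22) ≥ δ for every (h11, h12, h21, h22) ∈ (1, 2]⁴ outside H₀. -/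
/-!
Let `k_i` be the coordinatewise difference of two constellation points and put `u = k0 + A2 * k2`,
`v = A1 * k1`, so that a channel is in outage when `|h11 h22 u + h12 h21 v| < δ` for some nonzero
`(k0, k1, k2)`. Both channel products lie in `[1, 4]`, hence this near-cancellation forces
`|u| < 4 |v| + 1` and `|v| < 4 |u| + 1`. Since `A2 ≥ 3 Q0 ≥ |k0| + 1`, we have `|u| ≥ 1`
whenever `(k0, k2) ≠ 0`, which excludes `k1 = 0`. Slicing in `h11` shows that the event for given
`(k0, k1, k2)` has volume at most `2 δ / |u| ≤ 12 δ / (A1 |k1|)`.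

* If `k2 ≠ 0`, the comparison leaves at most `10 A1 |k1| / A2` values of `k2`, a number whose factor
  `A1 |k1|` cancels the one in the volume bound.
* If `k2 = 0`, the comparison leaves at most `18 Q0 / A1` values of `k1`.

Summing over the at most `5 Q0` values of `k0` and, in the first case, `4 Q1` values of `k1` gives
`2400 δ Q0 Q1 / A2 + 1080 δ (Q0 / A1) ^ 2`; both terms are at most of order `P ^ (-ε)`, the second
one because `5 / 6 ≤ α`.
-/

open MeasureTheory

/-- Minimum distance of the constellation
`g0·q0 + A1·g1·q1 + A2·g2·q2` over pairs of distinct integer triples with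
`|q0| ≤ Q0`, `|q1| ≤ Q1`, `|q2| ≤ Q2`. -/
noncomputable def dmin3 (A1 A2 Q0 Q1 Q2 g0 g1 g2 : ℝ) : ℝ :=
  sInf {d : ℝ | ∃ q0 q1 q2 q0' q1' q2' : ℤ,
    |(q0 : ℝ)| ≤ Q0 ∧ |(q0' : ℝ)| ≤ Q0 ∧
    |(q1 : ℝ)| ≤ Q1 ∧ |(q1' : ℝ)| ≤ Q1 ∧
    |(q2 : ℝ)| ≤ Q2 ∧ |(q2' : ℝ)| ≤ Q2 ∧
    (q0, q1, q2) ≠ (q0', q1', q2') ∧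
    d = |g0 * ((q0 : ℝ) - (q0' : ℝ)) + A1 * g1 * ((q1 : ℝ) - (q1' : ℝ)) +
          A2 * g2 * ((q2 : ℝ) - (q2' : ℝ))|}

/-- The outage set `H₀` of channel coefficients `(h11, h12, h21, h22) ∈ (1,2]⁴`
for which the minimum distance `dmin3` at `g0 = g2 = h11·h22`, `g1 = h12·h21`
is below `δ`. -/
noncomputable def outage3 (A1 A2 Q0 Q1 Q2 δ : ℝ) : Set (ℝ × ℝ × ℝ × ℝ) :=
  {p | (p.1 ∈ Set.Ioc (1 : ℝ) 2 ∧ p.2.1 ∈ Set.Ioc (1 : ℝ) 2 ∧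
        p.2.2.1 ∈ Set.Ioc (1 : ℝ) 2 ∧ p.2.2.2 ∈ Set.Ioc (1 : ℝ) 2) ∧
       dmin3 A1 A2 Q0 Q1 Q2 (p.1 * p.2.2.2) (p.2.1 * p.2.2.1) (p.1 * p.2.2.2) < δ}

section Measure

variable {X Y ι : Type*} [MeasurableSpace X] [MeasurableSpace Y]

lemma measure_prod_le_of_slice_le {μ : Measure X} {ν : Measure Y} [SFinite μ] [SFinite ν]
    {s : Set (X × Y)} {t : Set Y} {c : ENNReal} (hs : MeasurableSet s)
    (hst : ∀ p ∈ s, p.2 ∈ t) (hc : ∀ y ∈ t, μ ((fun x => (x, y)) ⁻¹' s) ≤ c) :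
    μ.prod ν s ≤ c * ν t := by
  rw [Measure.prod_apply_symm hs]
  refine (lintegral_mono fun y => ?_).trans (lintegral_indicator_const_le t c)
  by_cases hy : y ∈ t
  · simpa only [Set.indicator_of_mem hy] using hc y hy
  · have hempty : (fun x => (x, y)) ⁻¹' s = ∅ :=
      Set.eq_empty_of_forall_notMem fun x hx => hy (hst _ hx)
    rw [hempty, measure_empty]
    exact zero_le

lemma measure_biUnion_finset_le_ofReal_mul (μ : Measure X) (s : Finset ι) (f : ι → Set X)
    {n c : ℝ} (hc : 0 ≤ c) (hn : (s.card : ℝ) ≤ n) (h : ∀ i ∈ s, μ (f i) ≤ ENNReal.ofReal c) :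
    μ (⋃ i ∈ s, f i) ≤ ENNReal.ofReal (n * c) :=
  calc μ (⋃ i ∈ s, f i) ≤ ∑ i ∈ s, μ (f i) := measure_biUnion_finset_le s f
    _ ≤ s.card • ENNReal.ofReal c := Finset.sum_le_card_nsmul s _ _ h
    _ = ENNReal.ofReal (s.card * c) := by
      rw [nsmul_eq_mul, ENNReal.ofReal_mul (Nat.cast_nonneg _), ENNReal.ofReal_natCast]
    _ ≤ ENNReal.ofReal (n * c) := ENNReal.ofReal_le_ofReal (by gcongr)

lemma volume_setOf_abs_mul_add_lt {a : ℝ} (ha : a ≠ 0) (b δ : ℝ) :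
    volume {x : ℝ | |x * a + b| < δ} = ENNReal.ofReal (2 * (δ / |a|)) := by
  have hball : {x : ℝ | |x * a + b| < δ} = Metric.ball (-b / a) (δ / |a|) := by
    ext x
    have hx : x * a + b = (x - -b / a) * a := by field_simp; ring
    rw [Set.mem_ofPred_eq, Metric.mem_ball, Real.dist_eq, lt_div_iff₀ (abs_pos.2 ha), hx, abs_mul]
  rw [hball, Real.volume_ball]

end Measure

section IntBall

/-- The integers `k` with `|k| ≤ r`, as a finite set; the ranges over which unions of outage events
are taken. -/
noncomputable def intBall (r : ℝ) : Finset ℤ := Finset.Icc (-⌊r⌋) ⌊r⌋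

lemma mem_intBall {r : ℝ} {k : ℤ} : k ∈ intBall r ↔ |(k : ℝ)| ≤ r := by
  rw [intBall, Finset.mem_Icc, ← abs_le, Int.le_floor, Int.cast_abs]

lemma card_intBall_le {r : ℝ} (hr : 0 ≤ r) : ((intBall r).card : ℝ) ≤ 2 * r + 1 := by
  have hcard : ((intBall r).card : ℤ) = 2 * ⌊r⌋ + 1 := by
    have := Int.floor_nonneg.2 hr
    rw [intBall, Int.card_Icc, Int.toNat_of_nonneg] <;> lia
  have hcast : ((intBall r).card : ℝ) = 2 * ⌊r⌋ + 1 := by exact_mod_cast hcard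
  linarith [Int.floor_le r]

lemma card_intBall_erase_zero_le {r : ℝ} (hr : 0 ≤ r) :
    (((intBall r).erase 0).card : ℝ) ≤ 2 * r := by
  have hzero : (0 : ℤ) ∈ intBall r := mem_intBall.2 (by simpa using hr)
  rw [Finset.cast_card_erase_of_mem hzero]
  linarith [card_intBall_le hr]

lemma one_le_abs_intCast {k : ℤ} (hk : k ≠ 0) : (1 : ℝ) ≤ |(k : ℝ)| := by
  exact_mod_cast Int.one_le_abs hk

lemma le_abs_mul_intCast {A : ℝ} {k : ℤ} (hA : 0 ≤ A) (hk : k ≠ 0) : A ≤ |A * k| := by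
  rw [abs_mul, abs_of_nonneg hA]
  exact le_mul_of_one_le_right hA (one_le_abs_intCast hk)

lemma one_le_abs_intCast_add_mul {A r : ℝ} {k l : ℤ} (hk : |(k : ℝ)| ≤ r) (hA : r + 1 ≤ A)
    (hkl : ¬(k = 0 ∧ l = 0)) : 1 ≤ |(k : ℝ) + A * l| := by
  by_cases hl : l = 0
  · simpa [hl] using one_le_abs_intCast fun hk0 => hkl ⟨hk0, hl⟩
  · have hAl : A ≤ |A * l| := le_abs_mul_intCast (by linarith [abs_nonneg (k : ℝ)]) hl
    have htri : |A * l| ≤ |k + A * l| + |(k : ℝ)| := by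
      simpa only [add_sub_cancel_left] using abs_sub ((k : ℝ) + A * l) k
    linarith

end IntBall

section CancelSet

/-- The range `(1, 2]⁴` of the channel coefficients `(h11, h12, h21, h22)`. -/
def channelBox : Set (ℝ × ℝ × ℝ × ℝ) :=
  Set.Ioc 1 2 ×ˢ Set.Ioc 1 2 ×ˢ Set.Ioc 1 2 ×ˢ Set.Ioc 1 2

/-- The channels for which `h11 * h22 * u` and `h12 * h21 * v` cancel up to an error below `δ`: the
event that a difference of constellation points with combined coefficients `u` and `v` is received
with length below `δ`. -/
def cancelSet (δ u v : ℝ) : Set (ℝ × ℝ × ℝ × ℝ) :=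
  channelBox ∩ {h | |h.1 * h.2.2.2 * u + h.2.1 * h.2.2.1 * v| < δ}

lemma measurableSet_cancelSet (δ u v : ℝ) : MeasurableSet (cancelSet δ u v) := by
  refine MeasurableSet.inter ?_ (measurableSet_lt (by fun_prop) measurable_const)
  exact measurableSet_Ioc.prod
    (measurableSet_Ioc.prod (measurableSet_Ioc.prod measurableSet_Ioc))

lemma mul_mem_Icc_one_four {x y : ℝ} (hx : x ∈ Set.Ioc (1 : ℝ) 2) (hy : y ∈ Set.Ioc (1 : ℝ) 2) :
    x * y ∈ Set.Icc (1 : ℝ) 4 := by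
  obtain ⟨hx1, hx2⟩ := hx
  obtain ⟨hy1, hy2⟩ := hy
  constructor <;> nlinarith

lemma abs_lt_of_abs_mul_add_mul_lt_one {C g g' u v : ℝ} (hg : |g| ≤ C) (hg' : 1 ≤ |g'|)
    (h : |g * u + g' * v| < 1) : |v| < C * |u| + 1 :=
  calc |v| ≤ |g'| * |v| := le_mul_of_one_le_left (abs_nonneg v) hg'
    _ = |(g * u + g' * v) - g * u| := by rw [add_sub_cancel_left, abs_mul]
    _ ≤ |g * u + g' * v| + |g * u| := abs_sub _ _
    _ < 1 + C * |u| := by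
      rw [abs_mul g u]
      exact add_lt_add_of_lt_of_le h (by gcongr)
    _ = C * |u| + 1 := add_comm _ _

variable {δ u v : ℝ} {h : ℝ × ℝ × ℝ × ℝ}

lemma abs_lt_of_mem_cancelSet (hδ : δ ≤ 1) (hh : h ∈ cancelSet δ u v) :
    |u| < 4 * |v| + 1 ∧ |v| < 4 * |u| + 1 := by
  obtain ⟨⟨h11, h12, h21, h22⟩, hlt⟩ := hh
  have hlt1 : |h.1 * h.2.2.2 * u + h.2.1 * h.2.2.1 * v| < 1 := hlt.trans_le hδ
  obtain ⟨hu1, hu4⟩ := mul_mem_Icc_one_four h11 h22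
  obtain ⟨hv1, hv4⟩ := mul_mem_Icc_one_four h12 h21
  have hu := abs_of_nonneg (zero_le_one.trans hu1)
  have hv := abs_of_nonneg (zero_le_one.trans hv1)
  exact ⟨abs_lt_of_abs_mul_add_mul_lt_one (hv.trans_le hv4) (hu1.trans_eq hu.symm)
      (by rwa [add_comm]),
    abs_lt_of_abs_mul_add_mul_lt_one (hu.trans_le hu4) (hv1.trans_eq hv.symm) hlt1⟩

lemma volume_cancelSet_le_div_left (hδ : 0 ≤ δ) (hu : u ≠ 0) :
    volume (cancelSet δ u v) ≤ ENNReal.ofReal (2 * (δ / |u|)) := by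
  have hcube : volume (Set.Ioc (1 : ℝ) 2 ×ˢ Set.Ioc (1 : ℝ) 2 ×ˢ Set.Ioc (1 : ℝ) 2) = 1 := by
    simp only [Measure.volume_eq_prod, Measure.prod_prod, Real.volume_Ioc]
    norm_num
  rw [← mul_one (ENNReal.ofReal _), ← hcube]
  refine measure_prod_le_of_slice_le (measurableSet_cancelSet δ u v) (fun h hh => hh.1.2)
    fun y hy => ?_
  have hy1 : 1 < y.2.2 := hy.2.2.1
  have hslice : (fun x => (x, y)) ⁻¹' cancelSet δ u v ⊆
      {x | |x * (y.2.2 * u) + y.1 * y.2.1 * v| < δ} := by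
    rintro x ⟨-, hx⟩
    rwa [Set.mem_ofPred_eq, ← mul_assoc]
  have hu_le : |u| ≤ |y.2.2 * u| := by
    rw [abs_mul]
    exact le_mul_of_one_le_left (abs_nonneg u) (hy1.le.trans (le_abs_self _))
  calc volume ((fun x => (x, y)) ⁻¹' cancelSet δ u v)
      ≤ volume {x | |x * (y.2.2 * u) + y.1 * y.2.1 * v| < δ} := measure_mono hslice
    _ = ENNReal.ofReal (2 * (δ / |y.2.2 * u|)) :=
        volume_setOf_abs_mul_add_lt (mul_ne_zero (by linarith) hu) _ _
    _ ≤ ENNReal.ofReal (2 * (δ / |u|)) := ENNReal.ofReal_le_ofReal (by gcongr)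

lemma volume_cancelSet_le_div_right (hδ0 : 0 ≤ δ) (hδ1 : δ ≤ 1) (hv : 3 ≤ |v|) :
    volume (cancelSet δ u v) ≤ ENNReal.ofReal (12 * (δ / |v|)) := by
  obtain hempty | ⟨h, hh⟩ := (cancelSet δ u v).eq_empty_or_nonempty
  · simp [hempty]
  · have huv : |v| / 6 ≤ |u| := by linarith [(abs_lt_of_mem_cancelSet hδ1 hh).2]
    have hu : u ≠ 0 := abs_pos.1 (by linarith)
    refine (volume_cancelSet_le_div_left hδ0 hu).trans (ENNReal.ofReal_le_ofReal ?_)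
    calc 2 * (δ / |u|) ≤ 2 * (δ / (|v| / 6)) := by gcongr
      _ = 12 * (δ / |v|) := by ring

/-- The union of the cancellation events over the differences `k0` of first coordinates, which
range up to `2 * Q` in absolute value; `b` stands for the contribution `A2 * k2` of the third
coordinates. -/
def cancelUnion (Q δ b v : ℝ) : Set (ℝ × ℝ × ℝ × ℝ) :=
  ⋃ k0 ∈ intBall (2 * Q), cancelSet δ (k0 + b) v

lemma volume_cancelUnion_le {Q : ℝ} (hQ : 1 ≤ Q) (hδ0 : 0 ≤ δ) (hδ1 : δ ≤ 1) (hv : 3 ≤ |v|)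
    (b : ℝ) : volume (cancelUnion Q δ b v) ≤ ENNReal.ofReal (60 * Q * (δ / |v|)) := by
  have hcard : ((intBall (2 * Q)).card : ℝ) ≤ 5 * Q := by
    linarith [card_intBall_le (show 0 ≤ 2 * Q by linarith)]
  refine (measure_biUnion_finset_le_ofReal_mul volume _ _ (by positivity) hcard
    fun k0 _ => volume_cancelSet_le_div_right hδ0 hδ1 hv).trans_eq (congrArg _ ?_)
  ring

end CancelSet

section Outage

variable {A1 A2 Q0 Q1 Q2 δ : ℝ}

lemma exists_sub_of_dmin3_lt {g0 g1 g2 : ℝ} (hQ0 : 1 ≤ Q0) (hQ1 : 0 ≤ Q1) (hQ2 : 0 ≤ Q2)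
    (hlt : dmin3 A1 A2 Q0 Q1 Q2 g0 g1 g2 < δ) :
    ∃ k0 k1 k2 : ℤ, |(k0 : ℝ)| ≤ 2 * Q0 ∧ |(k1 : ℝ)| ≤ 2 * Q1 ∧ ¬(k0 = 0 ∧ k1 = 0 ∧ k2 = 0) ∧
      |g0 * k0 + A1 * g1 * k1 + A2 * g2 * k2| < δ := by
  have abs_sub_le_two_mul {q q' : ℤ} {Q : ℝ} (hq : |(q : ℝ)| ≤ Q) (hq' : |(q' : ℝ)| ≤ Q) :
      |((q - q' : ℤ) : ℝ)| ≤ 2 * Q := by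
    push_cast
    linarith [abs_sub (q : ℝ) q']
  have hQ0' : 0 ≤ Q0 := zero_le_one.trans hQ0
  obtain ⟨_, ⟨q0, q1, q2, q0', q1', q2', hq0, hq0', hq1, hq1', -, -, hne, rfl⟩, hd⟩ :=
    exists_lt_of_csInf_lt (by exact ⟨_, 1, 0, 0, 0, 0, 0, by simpa, by simpa, by simpa, by simpa,
      by simpa, by simpa, by simp, rfl⟩) hlt
  refine ⟨q0 - q0', q1 - q1', q2 - q2', abs_sub_le_two_mul hq0 hq0', abs_sub_le_two_mul hq1 hq1',
    ?_, by exact_mod_cast hd⟩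
  simpa only [sub_eq_zero, ne_eq, Prod.mk.injEq] using hne

lemma ne_zero_of_mem_cancelSet {k0 k1 k2 : ℤ} {h : ℝ × ℝ × ℝ × ℝ} (hδ : δ ≤ 1)
    (hA2 : 2 * Q0 + 1 ≤ A2) (hk0 : |(k0 : ℝ)| ≤ 2 * Q0) (hk : ¬(k0 = 0 ∧ k1 = 0 ∧ k2 = 0))
    (hh : h ∈ cancelSet δ (k0 + A2 * k2) (A1 * k1)) : k1 ≠ 0 := by
  rintro rfl
  have hu : 1 ≤ |(k0 : ℝ) + A2 * k2| :=
    one_le_abs_intCast_add_mul hk0 hA2 fun h02 => hk ⟨h02.1, rfl, h02.2⟩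
  have hu' := (abs_lt_of_mem_cancelSet hδ hh).1
  simp only [Int.cast_zero, mul_zero, abs_zero, zero_add] at hu'
  exact hu'.not_ge hu

lemma outage3_subset (hQ0 : 1 ≤ Q0) (hQ1 : 0 ≤ Q1) (hQ2 : 0 ≤ Q2) (hA1 : 3 * Q0 ≤ A1)
    (hA2 : 3 * Q0 ≤ A2) (hδ : δ ≤ 1) :
    outage3 A1 A2 Q0 Q1 Q2 δ ⊆
      (⋃ k1 ∈ (intBall (2 * Q1)).erase 0, ⋃ k2 ∈ (intBall (5 * |A1 * k1| / A2)).erase 0,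
        cancelUnion Q0 δ (A2 * k2) (A1 * k1)) ∪
      ⋃ k1 ∈ (intBall (9 * Q0 / A1)).erase 0, cancelUnion Q0 δ 0 (A1 * k1) := by
  rintro h ⟨hbox, hd⟩
  obtain ⟨k0, k1, k2, hk0, hk1, hk, hlt⟩ := exists_sub_of_dmin3_lt hQ0 hQ1 hQ2 hd
  have hh : h ∈ cancelSet δ (k0 + A2 * k2) (A1 * k1) :=
    ⟨hbox, (congrArg abs (by ring)).trans_lt hlt⟩
  have hk1_ne : k1 ≠ 0 := ne_zero_of_mem_cancelSet hδ (by linarith) hk0 hk hh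
  have hA1_abs : |A1| = A1 := abs_of_nonneg (by linarith)
  have hA2_abs : |A2| = A2 := abs_of_nonneg (by linarith)
  obtain ⟨hu, hv⟩ := abs_lt_of_mem_cancelSet hδ hh
  by_cases hk2 : k2 = 0
  · subst hk2
    simp only [Int.cast_zero, mul_zero, add_zero] at hv hh
    have hk1_le : |(k1 : ℝ)| ≤ 9 * Q0 / A1 := by
      rw [le_div_iff₀ (by linarith), mul_comm]
      rw [abs_mul, hA1_abs] at hv
      linarith
    refine Or.inr (Set.mem_biUnion (Finset.mem_erase.2 ⟨hk1_ne, mem_intBall.2 hk1_le⟩) ?_)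
    exact Set.mem_biUnion (mem_intBall.2 hk0) (by simpa only [add_zero] using hh)
  · have hA1_le : A1 ≤ |A1 * k1| := le_abs_mul_intCast (by linarith) hk1_ne
    have hk2_le : |(k2 : ℝ)| ≤ 5 * |A1 * k1| / A2 := by
      rw [le_div_iff₀ (by linarith), mul_comm]
      calc A2 * |(k2 : ℝ)| = |(k0 + A2 * k2) - (k0 : ℝ)| := by
            rw [add_sub_cancel_left, abs_mul, hA2_abs]
        _ ≤ |k0 + A2 * k2| + |(k0 : ℝ)| := abs_sub _ _
        _ ≤ 5 * |A1 * k1| := by linarith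
    refine Or.inl (Set.mem_biUnion (Finset.mem_erase.2 ⟨hk1_ne, mem_intBall.2 hk1⟩) ?_)
    exact Set.mem_biUnion (Finset.mem_erase.2 ⟨hk2, mem_intBall.2 hk2_le⟩)
      (Set.mem_biUnion (mem_intBall.2 hk0) hh)

lemma volume_biUnion_biUnion_cancelUnion_le (hQ0 : 1 ≤ Q0) (hQ1 : 0 ≤ Q1) (hA1 : 3 ≤ A1)
    (hA2 : 0 < A2) (hδ0 : 0 ≤ δ) (hδ1 : δ ≤ 1) :
    volume (⋃ k1 ∈ (intBall (2 * Q1)).erase 0, ⋃ k2 ∈ (intBall (5 * |A1 * k1| / A2)).erase 0,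
        cancelUnion Q0 δ (A2 * k2) (A1 * k1)) ≤
      ENNReal.ofReal (2400 * δ * (Q0 * Q1 / A2)) := by
  have hinner : ∀ k1 ∈ (intBall (2 * Q1)).erase 0,
      volume (⋃ k2 ∈ (intBall (5 * |A1 * k1| / A2)).erase 0,
        cancelUnion Q0 δ (A2 * k2) (A1 * k1)) ≤ ENNReal.ofReal (600 * δ * (Q0 / A2)) := by
    intro k1 hk1
    have hv : 3 ≤ |A1 * k1| :=
      hA1.trans (le_abs_mul_intCast (by linarith) (Finset.ne_of_mem_erase hk1))
    have hv0 : |A1 * k1| ≠ 0 := by linarith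
    refine (measure_biUnion_finset_le_ofReal_mul volume _ _ (by positivity)
      (card_intBall_erase_zero_le (by positivity))
      fun k2 _ => volume_cancelUnion_le hQ0 hδ0 hδ1 hv _).trans_eq (congrArg _ ?_)
    field_simp
    ring
  refine (measure_biUnion_finset_le_ofReal_mul volume _ _ (by positivity)
    (card_intBall_erase_zero_le (by positivity)) hinner).trans_eq (congrArg _ ?_)
  ring

lemma volume_biUnion_cancelUnion_le (hQ0 : 1 ≤ Q0) (hA1 : 3 ≤ A1) (hδ0 : 0 ≤ δ) (hδ1 : δ ≤ 1) :
    volume (⋃ k1 ∈ (intBall (9 * Q0 / A1)).erase 0, cancelUnion Q0 δ 0 (A1 * k1)) ≤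
      ENNReal.ofReal (1080 * δ * (Q0 / A1) ^ 2) := by
  have hinner : ∀ k1 ∈ (intBall (9 * Q0 / A1)).erase 0,
      volume (cancelUnion Q0 δ 0 (A1 * k1)) ≤ ENNReal.ofReal (60 * Q0 * (δ / A1)) := by
    intro k1 hk1
    have hv : A1 ≤ |A1 * k1| := le_abs_mul_intCast (by linarith) (Finset.ne_of_mem_erase hk1)
    exact (volume_cancelUnion_le hQ0 hδ0 hδ1 (hA1.trans hv) 0).trans
      (ENNReal.ofReal_le_ofReal (by gcongr))
  refine (measure_biUnion_finset_le_ofReal_mul volume _ _ (by positivity)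
    (card_intBall_erase_zero_le (by positivity)) hinner).trans_eq (congrArg _ ?_)
  ring

theorem volume_outage3_le (hQ0 : 1 ≤ Q0) (hQ1 : 0 ≤ Q1) (hQ2 : 0 ≤ Q2) (hA1 : 3 * Q0 ≤ A1)
    (hA2 : 3 * Q0 ≤ A2) (hδ0 : 0 ≤ δ) (hδ1 : δ ≤ 1) :
    volume (outage3 A1 A2 Q0 Q1 Q2 δ) ≤
      ENNReal.ofReal (2400 * δ * (Q0 * Q1 / A2) + 1080 * δ * (Q0 / A1) ^ 2) := by
  have hA2_pos : 0 < A2 := by linarith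
  rw [ENNReal.ofReal_add (by positivity) (by positivity)]
  exact (measure_mono (outage3_subset hQ0 hQ1 hQ2 hA1 hA2 hδ1)).trans <|
    (measure_union_le _ _).trans <| add_le_add
      (volume_biUnion_biUnion_cancelUnion_le hQ0 hQ1 (by linarith) hA2_pos hδ0 hδ1)
      (volume_biUnion_cancelUnion_le hQ0 (by linarith) hδ0 hδ1)

end Outage

theorem stmt4_general {α ε δ P Q0 Q1 Q2 A1 A2 : ℝ} (hα : 5 / 6 ≤ α) (hε : 0 ≤ ε)
    (hδ : δ ∈ Set.Icc (0 : ℝ) 1) (hP : 1 ≤ P) (hQ0_one : 1 ≤ Q0) (hQ2_nonneg : 0 ≤ Q2)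
    (hQ0 : Q0 = P ^ ((1 - α - ε) / 2)) (hQ1 : Q1 = P ^ ((α - 1 / 2 - ε) / 2))
    (hA1 : A1 = 3 * P ^ ((2 * α - 3 / 2) / 2)) (hA2 : A2 = 3 * P ^ ((1 : ℝ) / 4)) :
    volume (outage3 A1 A2 Q0 Q1 Q2 δ) ≤ ENNReal.ofReal (920 * δ * P ^ (-ε)) ∧
    ∀ h11 h12 h21 h22 : ℝ,
      h11 ∈ Set.Ioc (1 : ℝ) 2 → h12 ∈ Set.Ioc (1 : ℝ) 2 →
      h21 ∈ Set.Ioc (1 : ℝ) 2 → h22 ∈ Set.Ioc (1 : ℝ) 2 →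
      (h11, h12, h21, h22) ∉ outage3 A1 A2 Q0 Q1 Q2 δ →
      δ ≤ dmin3 A1 A2 Q0 Q1 Q2 (h11 * h22) (h12 * h21) (h11 * h22) := by
  refine ⟨?_, fun h11 h12 h21 h22 m11 m12 m21 m22 hout =>
    not_lt.1 fun hlt => hout ⟨⟨m11, m12, m21, m22⟩, hlt⟩⟩
  obtain ⟨hδ0, hδ1⟩ := hδ
  have hP0 : 0 < P := by linarith
  have hQ0A1 : 3 * Q0 ≤ A1 := by rw [hQ0, hA1]; gcongr 3 * P ^ ?_; linarith
  have hQ0A2 : 3 * Q0 ≤ A2 := by rw [hQ0, hA2]; gcongr 3 * P ^ ?_; linarith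
  have hA1_pos : 0 < A1 := by linarith
  have hQ1_nonneg : 0 ≤ Q1 := hQ1 ▸ Real.rpow_nonneg hP0.le _
  have hfirst : Q0 * Q1 / A2 = P ^ (-ε) / 3 := by
    rw [hQ0, hQ1, hA2, div_mul_eq_div_div_swap, ← Real.rpow_add hP0, ← Real.rpow_sub hP0]
    ring_nf
  have hsecond : (Q0 / A1) ^ 2 ≤ P ^ (-ε) / 9 := by
    have hratio : Q0 / A1 ≤ P ^ (-ε / 2) / 3 := by
      rw [hQ0, hA1, div_mul_eq_div_div_swap, ← Real.rpow_sub hP0]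
      gcongr
      linarith
    calc (Q0 / A1) ^ 2 ≤ (P ^ (-ε / 2) / 3) ^ 2 := by gcongr
      _ = P ^ (-ε) / 9 := by
        rw [div_pow, ← Real.rpow_mul_natCast hP0.le]
        norm_num
  refine (volume_outage3_le hQ0_one hQ1_nonneg hQ2_nonneg hQ0A1 hQ0A2 hδ0 hδ1).trans
    (ENNReal.ofReal_le_ofReal ?_)
  calc 2400 * δ * (Q0 * Q1 / A2) + 1080 * δ * (Q0 / A1) ^ 2
      ≤ 2400 * δ * (P ^ (-ε) / 3) + 1080 * δ * (P ^ (-ε) / 9) := by rw [hfirst]; gcongr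
    _ = 920 * δ * P ^ (-ε) := by ring

theorem stmt4 (α ε δ P : ℝ)
    (hα : α ∈ Set.Icc (5/6 : ℝ) 1) (hε : 0 < ε) (hδ : δ ∈ Set.Ioc (0 : ℝ) 1) (hP : 1 ≤ P)
    (Q0 Q1 Q2 A1 A2 : ℕ)
    (hQ0pos : 0 < Q0) (hQ1pos : 0 < Q1) (hQ2pos : 0 < Q2) (hA1pos : 0 < A1) (hA2pos : 0 < A2)
    (hQ0 : (Q0 : ℝ) = P ^ ((1 - α - ε)/2))
    (hQ1 : (Q1 : ℝ) = P ^ ((α - 1/2 - ε)/2))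
    (hQ2 : (Q2 : ℝ) = P ^ ((α - 1/2 - ε)/2))
    (hA1 : (A1 : ℝ) = 3 * P ^ ((2*α - 3/2)/2))
    (hA2 : (A2 : ℝ) = 3 * P ^ ((1 : ℝ)/4)) :
    volume (outage3 (A1 : ℝ) (A2 : ℝ) (Q0 : ℝ) (Q1 : ℝ) (Q2 : ℝ) δ)
        ≤ ENNReal.ofReal (12096 * δ * P ^ (-ε/2)) ∧
    ∀ h11 h12 h21 h22 : ℝ,
      h11 ∈ Set.Ioc (1 : ℝ) 2 → h12 ∈ Set.Ioc (1 : ℝ) 2 →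
      h21 ∈ Set.Ioc (1 : ℝ) 2 → h22 ∈ Set.Ioc (1 : ℝ) 2 →
      (h11, h12, h21, h22) ∉ outage3 (A1 : ℝ) (A2 : ℝ) (Q0 : ℝ) (Q1 : ℝ) (Q2 : ℝ) δ →
      δ ≤ dmin3 (A1 : ℝ) (A2 : ℝ) (Q0 : ℝ) (Q1 : ℝ) (Q2 : ℝ)
            (h11 * h22) (h12 * h21) (h11 * h22) := by
  refine (stmt4_general hα.1 hε.le (Set.Ioc_subset_Icc_self hδ) hP (Nat.one_le_cast.2 hQ0pos)
    Q2.cast_nonneg hQ0 hQ1 hA1 hA2).imp_left fun h => h.trans (ENNReal.ofReal_le_ofReal ?_)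
  have hδ0 := hδ.1
  gcongr <;> linarith
end

section
/- Fix α ∈ [1, 4/3], ε > 0, δ ∈ (0, 1], and P ≥ 1, and set Q′ = P^{(α/2−ε)/2}, A′0 = P^{(2−3α/2)/2}, and A′1 = P^{α/4}; assume Q′, A′0, A′1 are positive integers. For reals g0, g1, let d′_min(g0, g1) be the minimum of |A′0·g0·(q0 − q̃0) + A′1·g1·(q1 − q̃1)| over all pairs of integer pairs (q0, q1) ≠ (q̃0, q̃1) with |q0|, |q̃0|, |q1|, |q̃1| ≤ Q′. Then the set H′₀ := {(h11, h12, h21, h22) ∈ (1, 2]⁴ : d′_min(h11·h22, h12·h21) < δ} has four-dimensional Lebesgue measure at most 192·δ·P^{−ε/2}; in particular, d′_min(h11·h22, h12·h21) ≥ δ for every (h11, h12, h21, h22) ∈ (1, 2]⁴ outside H′₀. -/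
/-!
If the minimum distance is below `δ`, some nonzero integer difference vector `(a, b)` with
`|a| ≤ 2Q` satisfies `|A₀ g₀ a + A₁ g₁ b| < δ`. Since `A₀ g₀` and `A₁ g₁` are at least `δ`, the two
terms cannot reinforce each other, so `a` and `b` are nonzero and of opposite signs, and one may
replace them by `m = |a|`, `n = |b|` with `|A₀ g₀ m - A₁ g₁ n| < δ`.

* For fixed `(m, n)`, slicing in `h₁₁` shows that this event has measure at most `2δ / (A₀ m)`.
* As `g₀ ≤ 4`, `g₁ ≥ 1` and `δ ≤ A₀`, the event is empty unless `n ≤ 5 A₀ m / A₁`.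
  The factor `m` cancels, so each `m` contributes at most `10 δ / A₁`: no logarithm appears.
* There are at most `2Q` values of `m`, and `Q / A₁ = P ^ (-ε / 2)`.
-/

open MeasureTheory

/-- Minimum distance of the constellation `A0·g0·q0 + A1·g1·q1` over pairs of
distinct integer pairs with `|q0|, |q1| ≤ Q`. -/
noncomputable def dmin2 (A0 A1 Q g0 g1 : ℝ) : ℝ :=
  sInf {d : ℝ | ∃ q0 q1 q0' q1' : ℤ,
    |(q0 : ℝ)| ≤ Q ∧ |(q0' : ℝ)| ≤ Q ∧ |(q1 : ℝ)| ≤ Q ∧ |(q1' : ℝ)| ≤ Q ∧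
    (q0, q1) ≠ (q0', q1') ∧
    d = |A0 * g0 * ((q0 : ℝ) - (q0' : ℝ)) + A1 * g1 * ((q1 : ℝ) - (q1' : ℝ))|}

/-- The outage set `H′₀` of channel coefficients `(h11, h12, h21, h22) ∈ (1,2]⁴`
for which the minimum distance `dmin2` at `g0 = h11·h22`, `g1 = h12·h21` is below `δ`. -/
noncomputable def outage2 (A0 A1 Q δ : ℝ) : Set (ℝ × ℝ × ℝ × ℝ) :=
  {p | (p.1 ∈ Set.Ioc (1 : ℝ) 2 ∧ p.2.1 ∈ Set.Ioc (1 : ℝ) 2 ∧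
        p.2.2.1 ∈ Set.Ioc (1 : ℝ) 2 ∧ p.2.2.2 ∈ Set.Ioc (1 : ℝ) 2) ∧
       dmin2 A0 A1 Q (p.1 * p.2.2.2) (p.2.1 * p.2.2.1) < δ}

section General

variable {α β : Type*} [MeasurableSpace α] [MeasurableSpace β]

lemma measure_prod_le_mul_of_forall_slice_le (μ : Measure α) (ν : Measure β) [SFinite μ]
    [SFinite ν] {E : Set (α × β)} {B : Set β} {C : ENNReal} (hE : MeasurableSet E)
    (hEB : E ⊆ Prod.snd ⁻¹' B) (hC : ∀ y ∈ B, μ ((fun x => (x, y)) ⁻¹' E) ≤ C) :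
    μ.prod ν E ≤ C * ν B := by
  have hslice (y : β) : μ ((fun x => (x, y)) ⁻¹' E) ≤ B.indicator (fun _ => C) y := by
    by_cases hy : y ∈ B
    · simpa only [Set.indicator_of_mem hy] using hC y hy
    · have hempty : (fun x => (x, y)) ⁻¹' E = ∅ :=
        Set.eq_empty_of_forall_notMem fun x hx => hy (hEB hx)
      simp only [hempty, measure_empty, zero_le]
  calc μ.prod ν E = ∫⁻ y, μ ((fun x => (x, y)) ⁻¹' E) ∂ν := Measure.prod_apply_symm hE
    _ ≤ ∫⁻ y, B.indicator (fun _ => C) y ∂ν := lintegral_mono hslice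
    _ ≤ C * ν B := lintegral_indicator_const_le B C

lemma measure_biUnion_Icc_floor_le (μ : Measure α) {s : ℕ → Set α} {x c : ℝ} (hx : 0 ≤ x)
    (hc : 0 ≤ c) (hs : ∀ n, 1 ≤ n → μ (s n) ≤ ENNReal.ofReal c) :
    μ (⋃ n ∈ Finset.Icc 1 ⌊x⌋₊, s n) ≤ ENNReal.ofReal (x * c) :=
  calc μ (⋃ n ∈ Finset.Icc 1 ⌊x⌋₊, s n)
      ≤ ∑ n ∈ Finset.Icc 1 ⌊x⌋₊, μ (s n) := measure_biUnion_finset_le _ _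
    _ ≤ (Finset.Icc 1 ⌊x⌋₊).card • ENNReal.ofReal c :=
        Finset.sum_le_card_nsmul _ _ _ fun n hn => hs n (Finset.mem_Icc.mp hn).1
    _ = ENNReal.ofReal (⌊x⌋₊ * c) := by
        rw [Nat.card_Icc, Nat.add_sub_cancel, nsmul_eq_mul, ENNReal.ofReal_mul (by positivity),
          ENNReal.ofReal_natCast]
    _ ≤ ENNReal.ofReal (x * c) :=
        ENNReal.ofReal_le_ofReal (mul_le_mul_of_nonneg_right (Nat.floor_le hx) hc)

lemma volume_abs_mul_sub_lt {k : ℝ} (hk : 0 < k) (c δ : ℝ) :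
    volume {x : ℝ | |x * k - c| < δ} = ENNReal.ofReal (2 * δ / k) := by
  have hball : {x : ℝ | |x * k - c| < δ} = Metric.ball (c / k) (δ / k) := by
    ext x
    have hscale : |x * k - c| = |x - c / k| * k := by
      rw [← div_mul_cancel₀ c hk.ne', ← sub_mul, abs_mul, abs_of_pos hk,
        div_mul_cancel₀ c hk.ne']
    rw [Set.mem_ofPred_eq, hscale, Metric.mem_ball, Real.dist_eq, lt_div_iff₀ hk]
  rw [hball, Real.volume_ball, mul_div_assoc]

lemma abs_abs_sub_abs_of_mul_nonpos {R : Type*} [Ring R] [LinearOrder R] [IsStrictOrderedRing R]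
    {x y : R} (h : x * y ≤ 0) : |(|x| - |y|)| = |x + y| := by
  rcases mul_nonpos_iff.mp h with ⟨hx, hy⟩ | ⟨hx, hy⟩
  · rw [abs_of_nonneg hx, abs_of_nonpos hy, sub_neg_eq_add]
  · rw [abs_of_nonpos hx, abs_of_nonneg hy, ← abs_neg (x + y), neg_add']

end General

section DifferenceVectors

variable {A0 A1 Q δ g0 g1 u v : ℝ} {a b : ℤ}

lemma exists_difference_of_dmin2_lt (hQ : 1 ≤ Q) (h : dmin2 A0 A1 Q g0 g1 < δ) :
    ∃ a b : ℤ, (a ≠ 0 ∨ b ≠ 0) ∧ |(a : ℝ)| ≤ 2 * Q ∧ |A0 * g0 * a + A1 * g1 * b| < δ := by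
  have hQ0 : |((0 : ℤ) : ℝ)| ≤ Q := by simpa using zero_le_one.trans hQ
  have hQ1 : |((1 : ℤ) : ℝ)| ≤ Q := by simpa using hQ
  -- Nonemptiness is needed because `sInf ∅ = 0`.
  obtain ⟨_, ⟨q0, q1, r0, r1, hq0, hr0, -, -, hne, rfl⟩, hlt⟩ :=
    exists_lt_of_csInf_lt (by exact ⟨_, 1, 0, 0, 0, hQ1, hQ0, hQ0, hQ0, by simp, rfl⟩) h
  refine ⟨q0 - r0, q1 - r1, ?_, ?_, by exact_mod_cast hlt⟩
  · contrapose! hne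
    exact Prod.ext (sub_eq_zero.mp hne.1) (sub_eq_zero.mp hne.2)
  · push_cast
    linarith [abs_sub (q0 : ℝ) r0]

lemma mul_neg_of_abs_add_lt (hu : δ ≤ u) (hv : δ ≤ v) (hab : a ≠ 0 ∨ b ≠ 0)
    (h : |u * a + v * b| < δ) : a * b < 0 := by
  have hδ : 0 ≤ δ := (abs_nonneg _).trans h.le
  by_contra! hmul
  have hsum : (1 : ℝ) ≤ |(a : ℝ)| + |(b : ℝ)| := by
    have : 1 ≤ |a| + |b| := by grind
    exact_mod_cast this
  have hmul' : 0 ≤ (u * a) * (v * b) := by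
    have : (0 : ℝ) ≤ a * b := by exact_mod_cast hmul
    rw [mul_mul_mul_comm]
    exact mul_nonneg (mul_nonneg (hδ.trans hu) (hδ.trans hv)) this
  refine h.not_ge ?_
  calc δ ≤ δ * (|(a : ℝ)| + |(b : ℝ)|) := le_mul_of_one_le_right hδ hsum
    _ = δ * |(a : ℝ)| + δ * |(b : ℝ)| := mul_add ..
    _ ≤ u * |(a : ℝ)| + v * |(b : ℝ)| := by gcongr
    _ = |u * a + v * b| := by
        rw [(abs_add_eq_add_abs_iff _ _).mpr (mul_nonneg_iff.mp hmul'), abs_mul, abs_mul,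
          abs_of_nonneg (hδ.trans hu), abs_of_nonneg (hδ.trans hv)]

lemma abs_mul_natAbs_sub_mul_natAbs (hu : 0 ≤ u) (hv : 0 ≤ v) (hab : a * b ≤ 0) :
    |u * a.natAbs - v * b.natAbs| = |u * a + v * b| := by
  have hmul : (u * a) * (v * b) ≤ 0 := by
    have : (a * b : ℝ) ≤ 0 := by exact_mod_cast hab
    rw [mul_mul_mul_comm]
    exact mul_nonpos_of_nonneg_of_nonpos (mul_nonneg hu hv) this
  rw [← abs_abs_sub_abs_of_mul_nonpos hmul, abs_mul, abs_mul, abs_of_nonneg hu, abs_of_nonneg hv,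
    Nat.cast_natAbs, Nat.cast_natAbs, Int.cast_abs, Int.cast_abs]

end DifferenceVectors

/-- The channel coefficients `(h₁₁, h₁₂, h₂₁, h₂₂) ∈ (1, 2]⁴` for which the scaled gains
`u * (h₁₁ * h₂₂)` and `v * (h₁₂ * h₂₁)` are within `δ` of each other. The difference vector
`(m, -n)` violates the distance bound exactly on `nearCollision (A₀ * m) (A₁ * n) δ`. -/
def nearCollision (u v δ : ℝ) : Set (ℝ × ℝ × ℝ × ℝ) :=
  (Set.Ioc 1 2 ×ˢ Set.Ioc 1 2 ×ˢ Set.Ioc 1 2 ×ˢ Set.Ioc 1 2) ∩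
    {p | |u * (p.1 * p.2.2.2) - v * (p.2.1 * p.2.2.1)| < δ}

section NearCollision

variable {A0 A1 Q u δ : ℝ}

lemma measurableSet_nearCollision (u v δ : ℝ) : MeasurableSet (nearCollision u v δ) :=
  (measurableSet_Ioc.prod
    (measurableSet_Ioc.prod (measurableSet_Ioc.prod measurableSet_Ioc))).inter
      (isOpen_lt (by fun_prop) continuous_const).measurableSet

lemma volume_nearCollision_le (hu : 0 < u) (v : ℝ) (hδ : 0 ≤ δ) :
    volume (nearCollision u v δ) ≤ ENNReal.ofReal (2 * δ / u) := by
  let B : Set (ℝ × ℝ × ℝ) := Set.Ioc 1 2 ×ˢ Set.Ioc 1 2 ×ˢ Set.Ioc 1 2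
  have hB : volume B = 1 := by
    norm_num [B, Measure.volume_eq_prod, Measure.prod_prod, Real.volume_Ioc]
  have hslice : ∀ y ∈ B, volume ((fun x : ℝ => (x, y)) ⁻¹' nearCollision u v δ) ≤
      ENNReal.ofReal (2 * δ / u) := by
    rintro ⟨h12, h21, h22⟩ ⟨-, -, hh22, -⟩
    have hk : u ≤ u * h22 := le_mul_of_one_le_right hu.le hh22.le
    calc volume ((fun x : ℝ => (x, h12, h21, h22)) ⁻¹' nearCollision u v δ)
        ≤ volume {x : ℝ | |x * (u * h22) - v * (h12 * h21)| < δ} := by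
          refine measure_mono fun x hx => ?_
          rw [Set.mem_ofPred_eq, mul_left_comm]
          exact hx.2
      _ = ENNReal.ofReal (2 * δ / (u * h22)) :=
          volume_abs_mul_sub_lt (hu.trans_le hk) _ _
      _ ≤ ENNReal.ofReal (2 * δ / u) := by gcongr
  calc volume (nearCollision u v δ) ≤ ENNReal.ofReal (2 * δ / u) * volume B :=
        measure_prod_le_mul_of_forall_slice_le volume volume (measurableSet_nearCollision u v δ)
          (fun _ hp => hp.1.2) hslice
    _ = ENNReal.ofReal (2 * δ / u) := by rw [hB, mul_one]

lemma lt_of_mem_nearCollision {v : ℝ} {p : ℝ × ℝ × ℝ × ℝ} (hu : 0 ≤ u) (hv : 0 ≤ v)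
    (hp : p ∈ nearCollision u v δ) : v < 4 * u + δ := by
  obtain ⟨⟨h11, h12, h21, h22⟩, hlt⟩ := hp
  have hg0 : p.1 * p.2.2.2 ≤ 2 * 2 :=
    mul_le_mul h11.2 h22.2 (zero_le_one.trans h22.1.le) zero_le_two
  have hg1 : 1 ≤ p.2.1 * p.2.2.1 := one_le_mul_of_one_le_of_one_le h12.1.le h21.1.le
  have hlower : -δ < u * (p.1 * p.2.2.2) - v * (p.2.1 * p.2.2.1) := neg_lt_of_abs_lt hlt
  calc v ≤ v * (p.2.1 * p.2.2.1) := le_mul_of_one_le_right hv hg1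
    _ < u * (p.1 * p.2.2.2) + δ := by linarith
    _ ≤ u * (2 * 2) + δ := by gcongr
    _ = 4 * u + δ := by ring

lemma outage2_subset_biUnion_nearCollision (hδ : 0 < δ) (hA0 : δ ≤ A0) (hA1 : δ ≤ A1)
    (hQ : 1 ≤ Q) :
    outage2 A0 A1 Q δ ⊆ ⋃ m ∈ Finset.Icc 1 ⌊2 * Q⌋₊, ⋃ n ∈ Finset.Icc 1 ⌊5 * A0 * m / A1⌋₊,
      nearCollision (A0 * m) (A1 * n) δ := by
  rintro p ⟨hbox, hd⟩
  have hA0pos : 0 < A0 := hδ.trans_le hA0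
  have hA1pos : 0 < A1 := hδ.trans_le hA1
  have hg0 : A0 ≤ A0 * (p.1 * p.2.2.2) := le_mul_of_one_le_right hA0pos.le
    (one_le_mul_of_one_le_of_one_le hbox.1.1.le hbox.2.2.2.1.le)
  have hg1 : A1 ≤ A1 * (p.2.1 * p.2.2.1) := le_mul_of_one_le_right hA1pos.le
    (one_le_mul_of_one_le_of_one_le hbox.2.1.1.le hbox.2.2.1.1.le)
  obtain ⟨a, b, hab, haQ, hlt⟩ := exists_difference_of_dmin2_lt hQ hd
  have hneg : a * b < 0 := mul_neg_of_abs_add_lt (hA0.trans hg0) (hA1.trans hg1) hab hlt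
  have ha : 1 ≤ a.natAbs := Int.natAbs_pos.mpr (left_ne_zero_of_mul hneg.ne)
  have hb : 1 ≤ b.natAbs := Int.natAbs_pos.mpr (right_ne_zero_of_mul hneg.ne)
  have hmem : p ∈ nearCollision (A0 * a.natAbs) (A1 * b.natAbs) δ := by
    refine ⟨hbox, ?_⟩
    rw [Set.mem_ofPred_eq, mul_right_comm A0, mul_right_comm A1,
      abs_mul_natAbs_sub_mul_natAbs (hA0pos.le.trans hg0) (hA1pos.le.trans hg1) hneg.le]
    exact hlt
  have hδa : δ ≤ A0 * a.natAbs :=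
    hA0.trans (le_mul_of_one_le_right hA0pos.le (by exact_mod_cast ha))
  have hba : A1 * b.natAbs < 4 * (A0 * a.natAbs) + δ :=
    lt_of_mem_nearCollision (by positivity) (by positivity) hmem
  simp only [Set.mem_iUnion, Finset.mem_Icc]
  refine ⟨a.natAbs, ⟨ha, Nat.le_floor ?_⟩, b.natAbs, ⟨hb, Nat.le_floor ?_⟩, hmem⟩
  · rwa [Nat.cast_natAbs, Int.cast_abs]
  · rw [le_div_iff₀ hA1pos]
    linarith

lemma volume_outage2_le (hδ : 0 < δ) (hA0 : δ ≤ A0) (hA1 : δ ≤ A1) (hQ : 1 ≤ Q) :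
    volume (outage2 A0 A1 Q δ) ≤ ENNReal.ofReal (20 * δ * (Q / A1)) := by
  have hA0pos : 0 < A0 := hδ.trans_le hA0
  have hA1pos : 0 < A1 := hδ.trans_le hA1
  have hrow (m : ℕ) (hm : 1 ≤ m) :
      volume (⋃ n ∈ Finset.Icc 1 ⌊5 * A0 * m / A1⌋₊, nearCollision (A0 * m) (A1 * n) δ) ≤
        ENNReal.ofReal (10 * δ / A1) := by
    have hcancel : 5 * A0 * m / A1 * (2 * δ / (A0 * m)) = 10 * δ / A1 := by
      field_simp
      norm_num
    rw [← hcancel]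
    exact measure_biUnion_Icc_floor_le volume (by positivity) (by positivity) fun n _ =>
      volume_nearCollision_le (by positivity) _ hδ.le
  calc volume (outage2 A0 A1 Q δ)
      ≤ volume (⋃ m ∈ Finset.Icc 1 ⌊2 * Q⌋₊, ⋃ n ∈ Finset.Icc 1 ⌊5 * A0 * m / A1⌋₊,
          nearCollision (A0 * m) (A1 * n) δ) :=
        measure_mono (outage2_subset_biUnion_nearCollision hδ hA0 hA1 hQ)
    _ ≤ ENNReal.ofReal (2 * Q * (10 * δ / A1)) :=
        measure_biUnion_Icc_floor_le volume (by positivity) (by positivity) hrow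
    _ = ENNReal.ofReal (20 * δ * (Q / A1)) := by ring_nf

end NearCollision

theorem stmt5_general {A0 A1 Q δ : ℝ} (hδ : 0 < δ) (hA0 : δ ≤ A0) (hA1 : δ ≤ A1) (hQ : 1 ≤ Q) :
    volume (outage2 A0 A1 Q δ) ≤ ENNReal.ofReal (20 * δ * (Q / A1)) ∧
    ∀ h11 h12 h21 h22 : ℝ,
      h11 ∈ Set.Ioc (1 : ℝ) 2 → h12 ∈ Set.Ioc (1 : ℝ) 2 →
      h21 ∈ Set.Ioc (1 : ℝ) 2 → h22 ∈ Set.Ioc (1 : ℝ) 2 →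
      (h11, h12, h21, h22) ∉ outage2 A0 A1 Q δ →
      δ ≤ dmin2 A0 A1 Q (h11 * h22) (h12 * h21) :=
  ⟨volume_outage2_le hδ hA0 hA1 hQ, fun _ _ _ _ hh11 hh12 hh21 hh22 hnot =>
    not_lt.mp fun hlt => hnot ⟨⟨hh11, hh12, hh21, hh22⟩, hlt⟩⟩

theorem stmt5 (α ε δ P : ℝ)
    (hα : α ∈ Set.Icc (1 : ℝ) (4/3)) (hε : 0 < ε) (hδ : δ ∈ Set.Ioc (0 : ℝ) 1) (hP : 1 ≤ P)
    (Q A0 A1 : ℕ) (hQpos : 0 < Q) (hA0pos : 0 < A0) (hA1pos : 0 < A1)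
    (hQ : (Q : ℝ) = P ^ ((α/2 - ε)/2))
    (hA0 : (A0 : ℝ) = P ^ ((2 - 3*α/2)/2))
    (hA1 : (A1 : ℝ) = P ^ (α/4)) :
    volume (outage2 (A0 : ℝ) (A1 : ℝ) (Q : ℝ) δ) ≤ ENNReal.ofReal (192 * δ * P ^ (-ε/2)) ∧
    ∀ h11 h12 h21 h22 : ℝ,
      h11 ∈ Set.Ioc (1 : ℝ) 2 → h12 ∈ Set.Ioc (1 : ℝ) 2 →
      h21 ∈ Set.Ioc (1 : ℝ) 2 → h22 ∈ Set.Ioc (1 : ℝ) 2 →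
      (h11, h12, h21, h22) ∉ outage2 (A0 : ℝ) (A1 : ℝ) (Q : ℝ) δ →
      δ ≤ dmin2 (A0 : ℝ) (A1 : ℝ) (Q : ℝ) (h11 * h22) (h12 * h21) := by
  have hratio : (Q : ℝ) / A1 = P ^ (-ε / 2) := by
    rw [hQ, hA1, ← Real.rpow_sub (by linarith)]
    ring_nf
  have hconst : 20 * δ * ((Q : ℝ) / A1) ≤ 192 * δ * P ^ (-ε / 2) := by
    rw [hratio]
    have := hδ.1
    gcongr
    norm_num
  obtain ⟨hvol, hdist⟩ := stmt5_general hδ.1 (hδ.2.trans (Nat.one_le_cast.mpr hA0pos))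
    (hδ.2.trans (Nat.one_le_cast.mpr hA1pos)) (Nat.one_le_cast.mpr hQpos)
  exact ⟨hvol.trans (ENNReal.ofReal_le_ofReal hconst), hdist⟩
end

section
/- Let h, σ, e_max, γ′, α1, α2 be positive constants and let α′ satisfy 0 < α′ < α1 − α2. For each P ≥ 1, set Q_P = P^{α′/2}·h·γ′/(2·e_max) and ξ_P = γ′/Q_P, and for each P for which Q_P is a positive integer, let x_P be a random variable uniformly distributed on Ω(ξ_P, Q_P), let e_P be any random variable with |e_P| ≤ e_max almost surely, and let z ~ N(0, σ²) be independent of (x_P, e_P); set y′_P = P^{α1/2}·h·x_P + P^{α2/2}·e_P + z. Then there exist measurable estimators f_P : ℝ → Ω(ξ_P, Q_P) such that Pr[f_P(y′_P) ≠ x_P] → 0 as P → ∞ along the values of P for which Q_P is a positive integer. -/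
/-!
The received constellation points `P^(α1/2)·h·ξ·a` are spaced by `2·emax·P^((α1-α')/2)`, while the
interference is at most `emax·P^(α2/2)`. Since `α1 - α' > max α2 0`, half the spacing exceeds the
interference by a margin that tends to infinity with `P`. Rounding to the nearest constellation
point can only fail when the noise exceeds this margin, and the probability of that tends to zero,
uniformly over any tight family of noise laws.
-/

open MeasureTheory ProbabilityTheory
open scoped ENNReal

/-- The PAM constellation `Ω(ξ, Q) = {ξ·a : a ∈ ℤ, |a| ≤ Q}`. -/
def PAMset (ξ : ℝ) (Q : ℕ) : Set ℝ := {x | ∃ a : ℤ, |a| ≤ (Q : ℤ) ∧ x = ξ * (a : ℝ)}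

/-- `V` is uniformly distributed on the PAM constellation `Ω(ξ, Q)`:
each of the `2Q+1` points has probability `1/(2Q+1)`. -/
def IsUniformPAM {Ω : Type*} [MeasureSpace Ω] (V : Ω → ℝ) (ξ : ℝ) (Q : ℕ) : Prop :=
  ∀ a : ℤ, |a| ≤ (Q : ℤ) →
    volume {ω | V ω = ξ * (a : ℝ)} = 1 / (2 * (Q : ℝ≥0∞) + 1)

open Filter

/-- The nearest-point decoder for a symbol of `Ω(ξ, Q)` received through a channel of gain `g`:
the observation is rounded to a multiple of the received spacing `g * ξ`, the multiplier is clamped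
to `[-Q, Q]`, and the corresponding symbol is returned. -/
noncomputable def pamDecode (g ξ : ℝ) (Q : ℕ) (y : ℝ) : ℝ :=
  ξ * (max (-(Q : ℤ)) (min (Q : ℤ) (round (y / (g * ξ)))) : ℤ)

lemma measurable_pamDecode (g ξ : ℝ) (Q : ℕ) : Measurable (pamDecode g ξ Q) := by
  have measurable_round_div : Measurable fun y : ℝ => round (y / (g * ξ)) := by
    simp only [round_eq]
    exact Measurable.floor (by fun_prop)
  have measurable_symbol :
      Measurable fun n : ℤ => ξ * ((max (-(Q : ℤ)) (min (Q : ℤ) n) : ℤ) : ℝ) :=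
    measurable_from_top
  exact measurable_symbol.comp measurable_round_div

lemma pamDecode_mem_PAMset (g ξ : ℝ) (Q : ℕ) (y : ℝ) : pamDecode g ξ Q y ∈ PAMset ξ Q :=
  ⟨_, abs_le.2 ⟨le_max_left _ _, max_le (by lia) (min_le_left _ _)⟩, rfl⟩

lemma pamDecode_mul_add_eq {g ξ x w : ℝ} {Q : ℕ} (hx : x ∈ PAMset ξ Q) (hw : |w| < g * ξ / 2) :
    pamDecode g ξ Q (g * x + w) = x := by
  obtain ⟨a, ha, rfl⟩ := hx
  obtain ⟨hQa, haQ⟩ := abs_le.1 ha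
  obtain ⟨hw_lower, hw_upper⟩ := abs_lt.1 hw
  have spacing_pos : 0 < g * ξ := by linarith [abs_nonneg w]
  have round_eq_symbol : round ((g * (ξ * a) + w) / (g * ξ)) = a := by
    rw [round_eq_iff, Set.mem_Ico, le_div_iff₀ spacing_pos, div_lt_iff₀ spacing_pos]
    constructor <;> linarith
  rw [pamDecode, round_eq_symbol, min_eq_right haQ, max_eq_right hQa]

lemma measure_pamDecode_ne_le {Ω : Type*} [MeasurableSpace Ω] {μ : Measure Ω} {x w z : Ω → ℝ}
    {g ξ B T : ℝ} {Q : ℕ} (hx : ∀ᵐ ω ∂μ, x ω ∈ PAMset ξ Q) (hw : ∀ᵐ ω ∂μ, |w ω| ≤ B)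
    (hT : T < g * ξ / 2 - B) :
    μ {ω | pamDecode g ξ Q (g * x ω + w ω + z ω) ≠ x ω} ≤ μ {ω | T < |z ω|} := by
  refine measure_mono_ae ?_
  filter_upwards [hx, hw] with ω hxω hwω hne
  refine lt_of_not_ge fun hzω => ?_
  have disturbance_lt : |w ω + z ω| < g * ξ / 2 := by linarith [abs_add_le (w ω) (z ω)]
  exact hne (by rw [add_assoc, pamDecode_mul_add_eq hxω disturbance_lt])

lemma coe_image_Icc_eq_PAMset (ξ : ℝ) (Q : ℕ) :
    ((Finset.Icc (-(Q : ℤ)) Q).image fun a : ℤ => ξ * (a : ℝ) : Set ℝ) = PAMset ξ Q := by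
  ext v
  simp [PAMset, abs_le, eq_comm]

lemma IsUniformPAM.ae_mem_PAMset {Ω : Type*} [MeasureSpace Ω]
    [IsProbabilityMeasure (volume : Measure Ω)] {V : Ω → ℝ} {ξ : ℝ} {Q : ℕ}
    (hU : IsUniformPAM V ξ Q) (hV : Measurable V) (hξ : ξ ≠ 0) :
    ∀ᵐ ω, V ω ∈ PAMset ξ Q := by
  have symbol_injective : Function.Injective fun a : ℤ => ξ * (a : ℝ) :=
    (mul_right_injective₀ hξ).comp Int.cast_injective
  have card_symbols : (Finset.Icc (-(Q : ℤ)) Q).card = 2 * Q + 1 := by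
    rw [Int.card_Icc]
    lia
  rw [← coe_image_Icc_eq_PAMset]
  refine (mem_ae_iff_prob_eq_one (hV (Finset.measurableSet _))).2 ?_
  calc volume (V ⁻¹' ((Finset.Icc (-(Q : ℤ)) Q).image fun a : ℤ => ξ * (a : ℝ)))
      = ∑ a ∈ Finset.Icc (-(Q : ℤ)) Q, volume {ω | V ω = ξ * (a : ℝ)} := by
        rw [← sum_measure_preimage_singleton _ fun _ _ => hV (measurableSet_singleton _),
          Finset.sum_image symbol_injective.injOn]
        rfl
    _ = ∑ _a ∈ Finset.Icc (-(Q : ℤ)) Q, 1 / (2 * (Q : ℝ≥0∞) + 1) :=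
        Finset.sum_congr rfl fun a ha => hU a (abs_le.2 (Finset.mem_Icc.1 ha))
    _ = (2 * (Q : ℝ≥0∞) + 1) * (1 / (2 * (Q : ℝ≥0∞) + 1)) := by
        rw [Finset.sum_const, card_symbols, nsmul_eq_mul]
        push_cast
        rfl
    _ = 1 := ENNReal.mul_div_cancel (by simp) (by finiteness)

lemma exists_forall_measure_norm_gt_le {E : Type*} [NormedAddCommGroup E] [MeasurableSpace E]
    {S : Set (Measure E)} (hS : IsTightMeasureSet S) {ε : ℝ≥0∞} (hε : 0 < ε) :
    ∃ T : ℝ, ∀ ν ∈ S, ν {t | T < ‖t‖} ≤ ε := by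
  obtain ⟨T, hT⟩ :=
    (ENNReal.tendsto_nhds_zero.1 (tendsto_measure_norm_gt_of_isTightMeasureSet hS) ε hε).exists
  exact ⟨T, iSup₂_le_iff.1 hT⟩

lemma tendsto_rpow_sub_rpow_atTop {a b : ℝ} (ha : 0 < a) (hba : b < a) :
    Tendsto (fun P : ℝ => P ^ a - P ^ b) atTop atTop := by
  have ratio_tendsto : Tendsto (fun P : ℝ => 1 - P ^ (-(a - b))) atTop (nhds 1) := by
    simpa only [sub_zero] using (tendsto_rpow_neg_atTop (sub_pos.2 hba)).const_sub 1
  refine ((tendsto_rpow_atTop ha).atTop_mul_pos one_pos ratio_tendsto).congr' ?_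
  filter_upwards [eventually_gt_atTop 0] with P hP
  rw [mul_sub, mul_one, ← Real.rpow_add hP]
  ring_nf

lemma pam_half_spacing_eq {h emax γ' α1 α' P Q : ℝ} (hP : 0 < P) (hQ : Q ≠ 0)
    (hQP : Q = P ^ (α' / 2) * h * γ' / (2 * emax)) :
    P ^ (α1 / 2) * h * (γ' / Q) / 2 = emax * P ^ ((α1 - α') / 2) := by
  have hemax : emax ≠ 0 := by
    rintro rfl
    simp [hQ] at hQP
  have rpow_mul_eq : P ^ (α' / 2) * (h * γ') = 2 * emax * Q := by
    rw [hQP]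
    field_simp
  rw [sub_div, Real.rpow_sub hP]
  field_simp
  linear_combination rpow_mul_eq

theorem stmt11_general (h emax γ' α1 α2 α' : ℝ) (hemax : 0 < emax) (hα' : α' < α1)
    (hα'lt : α' < α1 - α2) {S : Set (Measure ℝ)} (hS : IsTightMeasureSet S) :
    ∃ f : ℝ → ℝ → ℝ,
      (∀ P : ℝ, Measurable (f P)) ∧
      ∀ ε : ℝ, 0 < ε → ∃ P0 : ℝ, ∀ P : ℝ, P0 ≤ P →
        ∀ Q : ℕ, 0 < Q → (Q : ℝ) = P ^ (α' / 2) * h * γ' / (2 * emax) →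
          (∀ y : ℝ, f P y ∈ PAMset (γ' / (Q : ℝ)) Q) ∧
          ∀ {Ω : Type*} [MeasurableSpace Ω] (μ : Measure Ω) (x e z : Ω → ℝ),
            (∀ᵐ ω ∂μ, x ω ∈ PAMset (γ' / (Q : ℝ)) Q) →
            (∀ᵐ ω ∂μ, |e ω| ≤ emax) →
            AEMeasurable z μ → μ.map z ∈ S →
            μ {ω | f P (P ^ (α1 / 2) * h * x ω + P ^ (α2 / 2) * e ω + z ω) ≠ x ω}
              ≤ ENNReal.ofReal ε := by
  let size (P : ℝ) : ℕ := ⌊P ^ (α' / 2) * h * γ' / (2 * emax)⌋₊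
  refine ⟨fun P => pamDecode (P ^ (α1 / 2) * h) (γ' / size P) (size P),
    fun P => measurable_pamDecode _ _ _, fun ε hε => ?_⟩
  obtain ⟨T, hT⟩ := exists_forall_measure_norm_gt_le hS (ENNReal.ofReal_pos.2 hε)
  have margin_tendsto : Tendsto
      (fun P : ℝ => emax * (P ^ ((α1 - α') / 2) - P ^ (α2 / 2))) atTop atTop :=
    (tendsto_rpow_sub_rpow_atTop (by linarith) (by linarith)).const_mul_atTop hemax
  obtain ⟨P0, hP0⟩ := eventually_atTop.1
    ((eventually_gt_atTop 0).and (margin_tendsto.eventually_gt_atTop T))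
  refine ⟨P0, fun P hP Q hQ hQP => ?_⟩
  obtain ⟨P_pos, T_lt_margin⟩ := hP0 P hP
  have size_eq : size P = Q := by simp only [size, ← hQP, Nat.floor_natCast]
  simp only [size_eq]
  refine ⟨pamDecode_mem_PAMset _ _ _, fun μ x e z hx he hz hzS => ?_⟩
  have interference_le : ∀ᵐ ω ∂μ, |P ^ (α2 / 2) * e ω| ≤ P ^ (α2 / 2) * emax := by
    filter_upwards [he] with ω heω
    rw [abs_mul, abs_of_pos (by positivity)]
    gcongr
  have T_lt : T < P ^ (α1 / 2) * h * (γ' / Q) / 2 - P ^ (α2 / 2) * emax := by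
    rw [pam_half_spacing_eq P_pos (by positivity) hQP]
    linarith
  calc μ {ω | pamDecode _ _ Q (P ^ (α1 / 2) * h * x ω + P ^ (α2 / 2) * e ω + z ω) ≠ x ω}
      ≤ μ {ω | T < |z ω|} := measure_pamDecode_ne_le hx interference_le T_lt
    _ = μ.map z {t | T < ‖t‖} :=
        (Measure.map_apply_of_aemeasurable hz
          (measurableSet_lt measurable_const measurable_norm)).symm
    _ ≤ ENNReal.ofReal ε := hT _ hzS

theorem stmt11 (h σ emax γ' α1 α2 α' : ℝ)
    (hh : 0 < h) (hσ : 0 < σ) (hemax : 0 < emax) (hγ' : 0 < γ')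
    (hα1 : 0 < α1) (hα2 : 0 < α2) (hα' : 0 < α') (hα'lt : α' < α1 - α2) :
    ∃ f : ℝ → ℝ → ℝ,
      (∀ P : ℝ, Measurable (f P)) ∧
      ∀ ε : ℝ, 0 < ε → ∃ P0 : ℝ, ∀ P : ℝ, P0 ≤ P → 1 ≤ P →
        ∀ Q : ℕ, 0 < Q → (Q : ℝ) = P ^ (α'/2) * h * γ' / (2 * emax) →
          (∀ y : ℝ, f P y ∈ PAMset (γ' / (Q : ℝ)) Q) ∧
          ∀ (Ω : Type) [MeasureSpace Ω] [IsProbabilityMeasure (volume : Measure Ω)]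
            (x e z : Ω → ℝ), Measurable x → Measurable e → Measurable z →
            IsUniformPAM x (γ' / (Q : ℝ)) Q →
            (∀ᵐ ω ∂volume, |e ω| ≤ emax) →
            Measure.map z volume = gaussianReal 0 (Real.toNNReal (σ ^ 2)) →
            IndepFun (fun ω => (x ω, e ω)) z volume →
            volume {ω | f P (P ^ (α1/2) * h * x ω + P ^ (α2/2) * e ω + z ω) ≠ x ω}
              ≤ ENNReal.ofReal ε := by
  obtain ⟨f, hf, hdecode⟩ := stmt11_general h emax γ' α1 α2 α' hemax (by linarith) hα'lt
    (isTightMeasureSet_singleton (μ := gaussianReal 0 (Real.toNNReal (σ ^ 2))))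
  exact ⟨f, hf, fun ε hε => (hdecode ε hε).imp fun P0 hP0 P hP _ Q hQ hQP =>
    ⟨(hP0 P hP Q hQ hQP).1, fun Ω _ _ x e z hx _ hz hU he hzlaw _ =>
      (hP0 P hP Q hQ hQP).2 volume x e z (hU.ae_mem_PAMset hx (by positivity)) he
        hz.aemeasurable hzlaw⟩⟩
end
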